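/- arXiv:2012.09599 — 2 statements merged into one kernel-verified Lean document; each statement's English description precedes it below -/
import Mathlib

section
/- For every integer s > 0, the braid (σ_1σ_2σ_3σ_4σ_5)^{2}(σ_1σ_2σ_3)^{3+4(s−1)} in B_6 is Markov equivalent to the braid (σ_1σ_2σ_3)^{5+4(s−1)}(σ_1σ_2) in B_4; that is, the K-knot K((6, 2), (4, 3+4(s−1))) is equivalent to the K-knot K((4, 5+4(s−1)), (3, 1)). -/
/-! Write `1, …, 5` for the generators `σ_i` and `W` for a power of `123`. In `B_6` one has
`(12345)² = 12341234·5·4`, so cyclic permutation brings the only `5` to the end and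
`(12345)² W` destabilizes to `4 W 12341234` in `B_5`. There `12341234·4 = 1231233·4·3`, so in the
same way a cyclic permutation and a destabilization lead to `3 W 1231233` in `B_4`, which is
conjugate to `W (123)² 33`.

For `W = (123)^(3 + 4k)` this is `Z·123·33` with `Z = (123)^(4(k + 1))`, a power of the full
twist and hence central in `B_4`. The target is `Z·123·12`, and `12312 = 2·1323` is cyclically
equivalent to `13232 = 33·123`, thus to `123·33`, while `Z` moves freely. -/

/-- The braid relations on `n` generators `σ_1, …, σ_n` (generator `i : Fin n`
represents `σ_{i+1}`). -/
def braidRels (n : ℕ) : Set (FreeGroup (Fin n)) :=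
  { r | (∃ i j : Fin n, (i : ℕ) + 1 = j ∧
          r = FreeGroup.of i * FreeGroup.of j * FreeGroup.of i *
              (FreeGroup.of j * FreeGroup.of i * FreeGroup.of j)⁻¹) ∨
        (∃ i j : Fin n, (i : ℕ) + 2 ≤ j ∧
          r = FreeGroup.of i * FreeGroup.of j * (FreeGroup.of j * FreeGroup.of i)⁻¹) }

/-- The braid group `B_n` on `n` strands, presented by generators
`σ_1, …, σ_{n-1}` and the braid relations. -/
def BraidGroup (n : ℕ) : Type := PresentedGroup (braidRels (n - 1))

instance (n : ℕ) : Group (BraidGroup n) := by unfold BraidGroup; infer_instance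

/-- The generator `σ_i` of `B_n` (defined for `1 ≤ i ≤ n - 1`, junk value `1` otherwise). -/
def σ (n i : ℕ) : BraidGroup n :=
  if h : 1 ≤ i ∧ i < n then PresentedGroup.of (⟨i - 1, by omega⟩ : Fin (n - 1)) else 1

lemma braidRels_map {m n : ℕ} (h : m ≤ n) {r : FreeGroup (Fin m)} (hr : r ∈ braidRels m) :
    FreeGroup.map (Fin.castLE h) r ∈ braidRels n := by
  rcases hr with ⟨i, j, hij, rfl⟩ | ⟨i, j, hij, rfl⟩
  · exact Or.inl ⟨Fin.castLE h i, Fin.castLE h j, by simpa using hij,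
      by simp [map_mul, map_inv, FreeGroup.map.of]⟩
  · exact Or.inr ⟨Fin.castLE h i, Fin.castLE h j, by simpa using hij,
      by simp [map_mul, map_inv, FreeGroup.map.of]⟩

/-- The inclusion homomorphism `ι : B_m → B_n` for `m ≤ n`, sending `σ_i` to `σ_i`. -/
def braidInclude {m n : ℕ} (h : m ≤ n) : BraidGroup m →* BraidGroup n :=
  PresentedGroup.toGroup
    (f := fun i => (PresentedGroup.of (Fin.castLE (Nat.sub_le_sub_right h 1) i) :
      PresentedGroup (braidRels (n - 1))))
    (by
      intro r hr
      have key : (FreeGroup.lift fun i =>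
            (PresentedGroup.of (Fin.castLE (Nat.sub_le_sub_right h 1) i) :
              PresentedGroup (braidRels (n - 1)))) =
          (PresentedGroup.mk (braidRels (n - 1))).comp
            (FreeGroup.map (Fin.castLE (Nat.sub_le_sub_right h 1))) := by
        apply FreeGroup.ext_hom
        intro a
        simp [PresentedGroup.of, FreeGroup.map.of]
      rw [key]
      simp only [MonoidHom.comp_apply]
      have hmem : FreeGroup.map (Fin.castLE (Nat.sub_le_sub_right h 1)) r ∈
          braidRels (n - 1) := braidRels_map _ hr
      exact (QuotientGroup.eq_one_iff _).2 (Subgroup.subset_normalClosure hmem))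

/-- The word `σ_lo σ_{lo+1} ⋯ σ_hi` in `B_n`. -/
def ascFrom (n lo hi : ℕ) : BraidGroup n :=
  ((List.range (hi + 1 - lo)).map fun i => σ n (lo + i)).prod

/-- The word `σ_1 σ_2 ⋯ σ_r` in `B_n`. -/
def asc (n r : ℕ) : BraidGroup n := ascFrom n 1 r

/-- The word `(σ_1⋯σ_top)(σ_1⋯σ_{top-1})⋯(σ_1⋯σ_bot)` in `B_n`. -/
def descWord (n top bot : ℕ) : BraidGroup n :=
  ((List.range (top + 1 - bot)).map fun i => asc n (top - i)).prod

/-- The positive half-twist word `Δ_n = (σ_1⋯σ_{n-1})(σ_1⋯σ_{n-2})⋯(σ_1σ_2)(σ_1)` in `B_n`. -/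
def halfTwist (n : ℕ) : BraidGroup n := descWord n (n - 1) 1

/-- The negative half-twist word
`N_n = (σ_{n-1}⁻¹⋯σ_1⁻¹)(σ_{n-1}⁻¹⋯σ_2⁻¹)⋯(σ_{n-1}⁻¹σ_{n-2}⁻¹)(σ_{n-1}⁻¹)` in `B_n`. -/
def negHalfTwist (n : ℕ) : BraidGroup n :=
  ((List.range (n - 1)).map fun i => (ascFrom n (i + 1) (n - 1))⁻¹).prod

/-- One elementary Markov move on the disjoint union of the braid groups:
conjugation, or positive/negative stabilization. -/
inductive MarkovStep : ((n : ℕ) × BraidGroup n) → ((n : ℕ) × BraidGroup n) → Prop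
  | conj {n : ℕ} (α β : BraidGroup n) : MarkovStep ⟨n, β⟩ ⟨n, α * β * α⁻¹⟩
  | stabPos {n : ℕ} (β : BraidGroup n) :
      MarkovStep ⟨n, β⟩ ⟨n + 1, braidInclude (Nat.le_succ n) β * σ (n + 1) n⟩
  | stabNeg {n : ℕ} (β : BraidGroup n) :
      MarkovStep ⟨n, β⟩ ⟨n + 1, braidInclude (Nat.le_succ n) β * (σ (n + 1) n)⁻¹⟩

/-- Markov equivalence: the smallest equivalence relation generated by the Markov moves.
Two braids are Markov equivalent iff their closures are isotopic links. -/
def MarkovEquiv (x y : (n : ℕ) × BraidGroup n) : Prop :=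
  Relation.EqvGen MarkovStep x y

section GroupWords

variable {G : Type*} [Group G] {a b c d e : G}

lemma six_word (hde : d * e * d = e * d * e) (hae : a * e = e * a) (hbe : b * e = e * b)
    (hce : c * e = e * c) :
    (a * b * c * d * e) ^ 2 = a * b * c * d * a * b * c * d * e * d := by
  calc (a * b * c * d * e) ^ 2 = a * b * c * d * (e * a) * b * c * d * e := by
        simp only [pow_two, mul_assoc]
    _ = a * b * c * d * a * (e * b) * c * d * e := by rw [← hae]; simp only [mul_assoc]
    _ = a * b * c * d * a * b * (e * c) * d * e := by rw [← hbe]; simp only [mul_assoc]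
    _ = a * b * c * d * a * b * c * (e * d * e) := by rw [← hce]; simp only [mul_assoc]
    _ = _ := by rw [← hde]; simp only [mul_assoc]

lemma five_word (hcd : c * d * c = d * c * d) (had : a * d = d * a) (hbd : b * d = d * b) :
    a * b * c * d * a * b * c * d * d = a * b * c * a * b * c * c * d * c := by
  calc a * b * c * d * a * b * c * d * d = a * b * c * (d * a) * b * c * d * d := by
        simp only [mul_assoc]
    _ = a * b * c * a * (d * b) * c * d * d := by rw [← had]; simp only [mul_assoc]
    _ = a * b * c * a * b * (d * c * d) * d := by rw [← hbd]; simp only [mul_assoc]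
    _ = a * b * c * a * b * c * (d * c * d) := by nth_rewrite 1 [← hcd]; simp only [mul_assoc]
    _ = _ := by rw [← hcd]; simp only [mul_assoc]

lemma four_word (hab : a * b * a = b * a * b) (hbc : b * c * b = c * b * c)
    (hac : a * c = c * a) : a * b * c * a * b = b * (a * c * b * c) := by
  calc a * b * c * a * b = a * b * (c * a) * b := by simp only [mul_assoc]
    _ = (a * b * a) * c * b := by rw [← hac]; simp only [mul_assoc]
    _ = b * a * (b * c * b) := by rw [hab]; simp only [mul_assoc]
    _ = _ := by rw [hbc]; simp only [mul_assoc]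

lemma four_word' (hbc : b * c * b = c * b * c) (hac : a * c = c * a) :
    a * c * b * c * b = c * c * (a * b * c) := by
  calc a * c * b * c * b = a * c * (b * c * b) := by simp only [mul_assoc]
    _ = (a * c) * c * b * c := by rw [hbc]; simp only [mul_assoc]
    _ = c * (a * c) * b * c := by nth_rewrite 1 [hac]; simp only [mul_assoc]
    _ = _ := by rw [hac]; simp only [mul_assoc]

lemma delta_mul_a (hab : a * b * a = b * a * b) (hac : a * c = c * a) :
    a * b * c * a = b * (a * b * c) := by
  calc a * b * c * a = a * b * (c * a) := by simp only [mul_assoc]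
    _ = (a * b * a) * c := by rw [← hac]; simp only [mul_assoc]
    _ = _ := by rw [hab]; simp only [mul_assoc]

lemma delta_mul_b (hbc : b * c * b = c * b * c) (hac : a * c = c * a) :
    a * b * c * b = c * (a * b * c) := by
  calc a * b * c * b = a * (b * c * b) := by simp only [mul_assoc]
    _ = (a * c) * b * c := by rw [hbc]; simp only [mul_assoc]
    _ = _ := by rw [hac]; simp only [mul_assoc]

lemma delta_sq_mul_c (hab : a * b * a = b * a * b) (hbc : b * c * b = c * b * c)
    (hac : a * c = c * a) :
    a * b * c * (a * b * c) * c = a * (a * b * c * (a * b * c)) := by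
  calc a * b * c * (a * b * c) * c = a * b * (c * a) * b * c * c := by simp only [mul_assoc]
    _ = a * b * a * (c * b * c) * c := by rw [← hac]; simp only [mul_assoc]
    _ = a * b * a * b * (c * b * c) := by nth_rewrite 1 [← hbc]; simp only [mul_assoc]
    _ = a * (b * a * b) * b * c * b := by rw [← hbc]; simp only [mul_assoc]
    _ = a * a * b * a * (b * c * b) := by rw [← hab]; simp only [mul_assoc]
    _ = a * a * b * (a * c) * b * c := by rw [hbc]; simp only [mul_assoc]
    _ = _ := by rw [hac]; simp only [mul_assoc]

/-- The full twist `(abc)⁴` commutes with each generator: conjugation by `δ = abc` sends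
`a ↦ b ↦ c`, and conjugation by `δ²` sends `c ↦ a`. -/
lemma full_twist_comm (hab : a * b * a = b * a * b) (hbc : b * c * b = c * b * c)
    (hac : a * c = c * a) :
    Commute ((a * b * c) ^ 4) a ∧ Commute ((a * b * c) ^ 4) b ∧ Commute ((a * b * c) ^ 4) c := by
  have h1 : SemiconjBy (a * b * c) a b := delta_mul_a hab hac
  have h2 : SemiconjBy (a * b * c) b c := delta_mul_b hbc hac
  have h3 : SemiconjBy (a * b * c * (a * b * c)) c a := delta_sq_mul_c hab hbc hac
  have h4 : (a * b * c) ^ 4 = a * b * c * (a * b * c) * (a * b * c * (a * b * c)) := by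
    simp only [pow_succ, pow_zero, one_mul, mul_assoc]
  have h12 := h2.mul_left h1
  have hb : (a * b * c) ^ 4 =
      a * b * c * (a * b * c * (a * b * c)) * (a * b * c) := by
    rw [h4]; simp only [mul_assoc]
  refine ⟨?_, ?_, ?_⟩
  · rw [h4]; exact h3.mul_left h12
  · rw [hb]; exact (h1.mul_left h3).mul_left h2
  · rw [h4]; exact h12.mul_left h3

end GroupWords

section BraidGenerators

lemma sigma_eq (n i : ℕ) (h1 : 1 ≤ i) (h2 : i < n) :
    σ n i = (PresentedGroup.of (⟨i - 1, by omega⟩ : Fin (n - 1)) :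
      PresentedGroup (braidRels (n - 1))) :=
  dif_pos ⟨h1, h2⟩

lemma sigma_braid (n i : ℕ) (h1 : 1 ≤ i) (h2 : i + 1 < n) :
    σ n i * σ n (i + 1) * σ n i = σ n (i + 1) * σ n i * σ n (i + 1) := by
  rw [sigma_eq n i h1 (by omega), sigma_eq n _ (by omega) h2]
  refine mul_inv_eq_one.1 ?_
  exact (QuotientGroup.eq_one_iff _).2 (Subgroup.subset_normalClosure
    (Or.inl ⟨⟨i - 1, by omega⟩, ⟨i + 1 - 1, by omega⟩, by simp; omega, rfl⟩))

lemma sigma_comm (n i j : ℕ) (h1 : 1 ≤ i) (h : i + 2 ≤ j) (h2 : j < n) :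
    σ n i * σ n j = σ n j * σ n i := by
  rw [sigma_eq n i h1 (by omega), sigma_eq n _ (by omega) h2]
  refine mul_inv_eq_one.1 ?_
  exact (QuotientGroup.eq_one_iff _).2 (Subgroup.subset_normalClosure
    (Or.inr ⟨⟨i - 1, by omega⟩, ⟨j - 1, by omega⟩, by simp; omega, rfl⟩))

lemma braidInclude_sigma {m n : ℕ} (h : m ≤ n) (i : ℕ) (h1 : 1 ≤ i) (h2 : i < m) :
    braidInclude h (σ m i) = σ n i := by
  rw [sigma_eq m i h1 h2, sigma_eq n i h1 (by omega)]
  exact PresentedGroup.toGroup.of _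

lemma asc_two (n : ℕ) : asc n 2 = σ n 1 * σ n 2 := by
  simp [asc, ascFrom, List.range_succ]

lemma asc_three (n : ℕ) : asc n 3 = σ n 1 * σ n 2 * σ n 3 := by
  simp [asc, ascFrom, List.range_succ, mul_assoc]

lemma asc_five (n : ℕ) : asc n 5 = σ n 1 * σ n 2 * σ n 3 * σ n 4 * σ n 5 := by
  simp [asc, ascFrom, List.range_succ, mul_assoc]

end BraidGenerators

section MarkovMoves

lemma MarkovEquiv.trans {x y z : (n : ℕ) × BraidGroup n} (h : MarkovEquiv x y)
    (h' : MarkovEquiv y z) : MarkovEquiv x z :=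
  Relation.EqvGen.trans _ _ _ h h'

lemma markovEquiv_cyclic {n : ℕ} (x y : BraidGroup n) : MarkovEquiv ⟨n, x * y⟩ ⟨n, y * x⟩ := by
  have h := MarkovStep.conj y (x * y)
  rw [← mul_assoc, mul_inv_cancel_right] at h
  exact Relation.EqvGen.rel _ _ h

lemma markovEquiv_destab {n : ℕ} (β : BraidGroup n) :
    MarkovEquiv ⟨n + 1, braidInclude (Nat.le_succ n) β * σ (n + 1) n⟩ ⟨n, β⟩ :=
  Relation.EqvGen.symm _ _ (Relation.EqvGen.rel _ _ (MarkovStep.stabPos β))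

lemma six_to_five (m : ℕ) : MarkovEquiv ⟨6, asc 6 5 ^ 2 * asc 6 3 ^ m⟩
    ⟨5, σ 5 4 * asc 5 3 ^ m *
      (σ 5 1 * σ 5 2 * σ 5 3 * σ 5 4 * σ 5 1 * σ 5 2 * σ 5 3 * σ 5 4)⟩ := by
  have key := six_word (sigma_braid 6 4 (by omega) (by omega))
    (sigma_comm 6 1 5 (by omega) (by omega) (by omega))
    (sigma_comm 6 2 5 (by omega) (by omega) (by omega))
    (sigma_comm 6 3 5 (by omega) (by omega) (by omega))
  rw [asc_five, key, mul_assoc _ (σ 6 4) (asc 6 3 ^ m)]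
  refine (markovEquiv_cyclic _ _).trans ?_
  convert markovEquiv_destab _ using 2
  simp [asc_three, braidInclude_sigma, mul_assoc]

lemma five_to_four (m : ℕ) : MarkovEquiv
    ⟨5, σ 5 4 * asc 5 3 ^ m *
      (σ 5 1 * σ 5 2 * σ 5 3 * σ 5 4 * σ 5 1 * σ 5 2 * σ 5 3 * σ 5 4)⟩
    ⟨4, σ 4 3 * asc 4 3 ^ m * (σ 4 1 * σ 4 2 * σ 4 3 * σ 4 1 * σ 4 2 * σ 4 3 * σ 4 3)⟩ := by
  have key := five_word (sigma_braid 5 3 (by omega) (by omega))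
    (sigma_comm 5 1 4 (by omega) (by omega) (by omega))
    (sigma_comm 5 2 4 (by omega) (by omega) (by omega))
  rw [mul_assoc (σ 5 4)]
  refine (markovEquiv_cyclic _ _).trans ?_
  rw [mul_assoc (asc 5 3 ^ m), key, ← mul_assoc (asc 5 3 ^ m)]
  refine (markovEquiv_cyclic _ _).trans ?_
  convert markovEquiv_destab _ using 2
  simp [asc_three, braidInclude_sigma, mul_assoc]

lemma four_to_target (k : ℕ) : MarkovEquiv
    ⟨4, σ 4 3 * asc 4 3 ^ (3 + 4 * k) *
      (σ 4 1 * σ 4 2 * σ 4 3 * σ 4 1 * σ 4 2 * σ 4 3 * σ 4 3)⟩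
    ⟨4, asc 4 3 ^ (5 + 4 * k) * asc 4 2⟩ := by
  have hab := sigma_braid 4 1 (by omega) (by omega)
  have hbc := sigma_braid 4 2 (by omega) (by omega)
  have hac := sigma_comm 4 1 3 (by omega) (by omega) (by omega)
  obtain ⟨-, hZb, hZc⟩ := full_twist_comm hab hbc hac
  have w1 := four_word hab hbc hac
  have w2 := four_word' hbc hac
  simp only [Nat.reduceAdd] at hZb hZc w1 w2
  rw [asc_two, asc_three]
  generalize σ 4 1 = a at *
  generalize σ 4 2 = b at *
  generalize σ 4 3 = c at *
  have hb : Commute (((a * b * c) ^ 4) ^ (k + 1)) b := hZb.pow_left _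
  have hc : Commute (((a * b * c) ^ 4) ^ (k + 1)) c := hZc.pow_left _
  have e5 : (a * b * c) ^ (5 + 4 * k) = ((a * b * c) ^ 4) ^ (k + 1) * (a * b * c) := by
    rw [← pow_mul, ← pow_succ]; congr 1; ring
  have e5' : (a * b * c) ^ (5 + 4 * k) =
      (a * b * c) ^ (3 + 4 * k) * (a * b * c) * (a * b * c) := by
    rw [← pow_succ, ← pow_succ]; congr 1; ring
  have s1 : c * (a * b * c) ^ (3 + 4 * k) * (a * b * c * a * b * c * c) =
      c * ((a * b * c) ^ (5 + 4 * k) * c) := by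
    rw [e5']; simp only [mul_assoc]
  have s2 : (a * b * c) ^ (5 + 4 * k) * (a * b) =
      b * (((a * b * c) ^ 4) ^ (k + 1) * (a * c * b * c)) := by
    rw [e5, mul_assoc, ← mul_assoc (a * b * c), w1, ← mul_assoc, hb.eq, mul_assoc]
  have s3 : ((a * b * c) ^ 4) ^ (k + 1) * (a * c * b * c) * b =
      c * c * (a * b * c) ^ (5 + 4 * k) := by
    rw [mul_assoc, w2, e5, ← mul_assoc, (hc.mul_right hc).eq, mul_assoc]
  rw [s1, s2]
  refine (markovEquiv_cyclic _ _).trans (MarkovEquiv.trans ?_ (markovEquiv_cyclic _ b))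
  rw [s3, mul_assoc]
  exact markovEquiv_cyclic _ _

end MarkovMoves

/-- Lemma 3.3. For every integer `s > 0`, the braid
`(σ_1σ_2σ_3σ_4σ_5)^{2}(σ_1σ_2σ_3)^{3+4(s−1)}` in `B_6` is Markov equivalent to the braid
`(σ_1σ_2σ_3)^{5+4(s−1)}(σ_1σ_2)` in `B_4`; that is, the K-knot
`K((6, 2), (4, 3+4(s−1)))` is equivalent to the K-knot `K((4, 5+4(s−1)), (3, 1))`. -/
theorem kknot_six_eq_kknot_four (s : ℕ) (hs : 0 < s) :
    MarkovEquiv ⟨6, asc 6 5 ^ 2 * asc 6 3 ^ (3 + 4 * (s - 1))⟩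
      ⟨4, asc 4 3 ^ (5 + 4 * (s - 1)) * asc 4 2⟩ := by
  exact ((six_to_five _).trans (five_to_four _)).trans (four_to_target _)
end

section
/- For every integer s > 0, the braid (σ_1σ_2σ_3)^{5+4(s−1)}σ_1^{2} in B_4 is Markov equivalent to the braid (σ_1σ_2σ_3)^{5+4(s−1)}σ_1σ_2 in B_4; that is, the twisted torus knot T(4, 5+4(s−1); 2, 1) is equivalent to the K-knot K((4, 5+4(s−1)), (3, 1)). -/
lemma σ_eq_of (n i : ℕ) (h : 1 ≤ i ∧ i < n) :
    σ n i = (PresentedGroup.of (⟨i - 1, by omega⟩ : Fin (n - 1)) :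
      PresentedGroup (braidRels (n - 1))) :=
  dif_pos h

lemma σ_braid (n i : ℕ) (hi : 1 ≤ i) (hn : i + 1 < n) :
    σ n i * σ n (i + 1) * σ n i = σ n (i + 1) * σ n i * σ n (i + 1) := by
  have h₁ : 1 ≤ i ∧ i < n := by omega
  have h₂ : 1 ≤ i + 1 ∧ i + 1 < n := by omega
  rw [σ_eq_of n i h₁, σ_eq_of n (i + 1) h₂]
  apply mul_inv_eq_one.mp
  refine (QuotientGroup.eq_one_iff _).2 (Subgroup.subset_normalClosure (Or.inl
    ⟨⟨i - 1, by omega⟩, ⟨i + 1 - 1, by omega⟩, ?_, rfl⟩))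
  simp only
  omega

lemma σ_comm (n i j : ℕ) (hi : 1 ≤ i) (hij : i + 2 ≤ j) (hn : j < n) :
    σ n i * σ n j = σ n j * σ n i := by
  have h₁ : 1 ≤ i ∧ i < n := by omega
  have h₂ : 1 ≤ j ∧ j < n := by omega
  rw [σ_eq_of n i h₁, σ_eq_of n (j) h₂]
  apply mul_inv_eq_one.mp
  refine (QuotientGroup.eq_one_iff _).2 (Subgroup.subset_normalClosure (Or.inr
    ⟨⟨i - 1, by omega⟩, ⟨j - 1, by omega⟩, ?_, rfl⟩))
  simp only
  omega

lemma asc_four_three : asc 4 3 = σ 4 1 * σ 4 2 * σ 4 3 := by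
  simp [asc, ascFrom, List.range_succ, mul_assoc]

section

variable {G : Type*} [Group G] {a b c : G}

lemma delta_mul_first (h₁ : a * b * a = b * a * b) (h₃ : a * c = c * a) :
    a * b * c * a = b * (a * b * c) := by
  calc a * b * c * a = a * b * (c * a) := by group
    _ = a * b * a * c := by rw [← h₃]; group
    _ = b * (a * b * c) := by rw [h₁]; group

lemma delta_mul_second (h₂ : b * c * b = c * b * c) (h₃ : a * c = c * a) :
    a * b * c * b = c * (a * b * c) := by
  calc a * b * c * b = a * (b * c * b) := by group
    _ = a * c * b * c := by rw [h₂]; group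
    _ = c * (a * b * c) := by rw [h₃]; group

/-- The shift `a ↦ b ↦ c` induced by conjugation with `δ = abc` closes up: `δ²cδ⁻² = a`. -/
lemma delta_sq_mul_third (h₁ : a * b * a = b * a * b) (h₂ : b * c * b = c * b * c)
    (h₃ : a * c = c * a) :
    (a * b * c) * (a * b * c) * c = a * ((a * b * c) * (a * b * c)) := by
  calc (a * b * c) * (a * b * c) * c = a * b * (c * a) * b * c * c := by group
    _ = a * b * a * (c * b * c) * c := by rw [← h₃]; group
    _ = a * (b * a * b) * c * b * c := by rw [← h₂]; group
    _ = a * a * b * (a * c) * b * c := by rw [← h₁]; group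
    _ = a * ((a * b * c) * (a * b * c)) := by rw [h₃]; group

/-- The part of the centrality of the full twist `δ⁴` that the conjugation needs. -/
lemma commute_delta_pow_four (h₁ : a * b * a = b * a * b) (h₂ : b * c * b = c * b * c)
    (h₃ : a * c = c * a) : Commute ((a * b * c) ^ 4) b := by
  have e₁ := delta_mul_first h₁ h₃
  have e₂ := delta_mul_second h₂ h₃
  have e₃ := delta_sq_mul_third h₁ h₂ h₃
  generalize a * b * c = d at e₁ e₂ e₃
  calc d ^ 4 * b = d * d * d * (d * b) := by simp only [pow_succ, pow_zero, one_mul, mul_assoc]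
    _ = d * (d * d * c) * d := by rw [e₂]; group
    _ = d * a * d * d * d := by rw [e₃]; group
    _ = b * d ^ 4 := by rw [e₁]; simp only [pow_succ, pow_zero, one_mul, mul_assoc]

lemma delta_pow_conj (h₁ : a * b * a = b * a * b) (h₂ : b * c * b = c * b * c)
    (h₃ : a * c = c * a) (k : ℕ) :
    (b * (a * b * c)) * ((a * b * c) ^ (5 + 4 * k) * a ^ 2) * (b * (a * b * c))⁻¹ =
      (a * b * c) ^ (5 + 4 * k) * a * b := by
  have e₁ := delta_mul_first h₁ h₃
  have hc : Commute ((a * b * c) ^ (4 * (k + 1))) b := by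
    rw [pow_mul]; exact (commute_delta_pow_four h₁ h₂ h₃).pow_left _
  generalize a * b * c = d at e₁ hc
  have hN : d ^ (5 + 4 * k) = d ^ (4 * (k + 1)) * d := by rw [← pow_succ]; congr 1; ring
  have hd : d * d ^ (4 * (k + 1)) = d ^ (4 * (k + 1)) * d := (pow_mul_comm' d _).symm
  rw [hN, mul_inv_eq_iff_eq_mul]
  generalize d ^ (4 * (k + 1)) = D at hc hd
  calc b * d * (D * d * a ^ 2) = b * (d * D) * (d * a) * a := by rw [pow_two]; group
    _ = b * D * d * b * (d * a) := by rw [hd, e₁]; simp only [mul_assoc, e₁]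
    _ = b * D * d * b * b * d := by rw [e₁]; group
    _ = D * (b * d) * b * b * d := by rw [← hc.eq]; group
    _ = D * (d * a) * b * (b * d) := by rw [e₁]; group
    _ = D * d * a * b * (b * d) := by group

end

/-- For every integer `s > 0`, the braid
`(σ_1σ_2σ_3)^{5+4(s−1)}σ_1^{2}` in `B_4` is Markov equivalent to the braid
`(σ_1σ_2σ_3)^{5+4(s−1)}σ_1σ_2` in `B_4`; that is, the twisted torus knot
`T(4, 5+4(s−1); 2, 1)` is equivalent to the K-knot `K((4, 5+4(s−1)), (3, 1))`. -/
theorem twistedTorusKnot_eq_kknot_four (s : ℕ) (hs : 0 < s) :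
    MarkovEquiv ⟨4, asc 4 3 ^ (5 + 4 * (s - 1)) * σ 4 1 ^ 2⟩
      ⟨4, asc 4 3 ^ (5 + 4 * (s - 1)) * σ 4 1 * σ 4 2⟩ := by
  rw [asc_four_three,
    ← delta_pow_conj (σ_braid 4 1 le_rfl (by norm_num)) (σ_braid 4 2 (by norm_num) (by norm_num))
      (σ_comm 4 1 3 le_rfl le_rfl (by norm_num)) (s - 1)]
  exact .rel _ _ (.conj _ _)
end
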